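/- Let μ be a Borel probability measure on ℝ with ∫_ℝ e^{itx} dμ(x) = e^{−|t|^α} for all t (0 < α ≤ 2), and let w : ℝ → [0,∞) be an even measurable function with ∫_ℝ |u| w(u) du < ∞. Define h_μ(x) = ∫_ℝ u sin(ux) e^{−|u|^α} w(u) du. Then for every s ∈ ℝ, ∫_ℝ e^{isx} h_μ(x) dμ(x) = i ∫_ℝ e^{−|s−u|^α − |u|^α} u w(u) du. -/

import Mathlib

open MeasureTheory Real

/-!
Since `sin ⟪x, u⟫ = i/2 (e^{-i⟪x, u⟫} - e^{i⟪x, u⟫})`, integrating `e^{i⟪x, s⟫} sin ⟪x, u⟫` against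
`μ` gives `i/2 (φ(s - u) - φ(s + u))`, where `φ` is the characteristic function of `μ`. After
Fubini's theorem this is integrated against an odd function of `u`, and the reflection `u ↦ -u`
identifies the contributions of the two terms.
-/

open scoped RealInnerProductSpace

lemma integral_comp_add_mul_of_odd {G A : Type*} [AddGroup G] [MeasurableSpace G] [MeasurableNeg G]
    [NonUnitalNormedRing A] [NormedSpace ℝ A] {ν : Measure G} [ν.IsNegInvariant] (f : G → A)
    {g : G → A} (hodd : g.Odd) (s : G) :
    ∫ u, f (s + u) * g u ∂ν = -∫ u, f (s - u) * g u ∂ν := by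
  rw [← integral_neg_eq_self, ← integral_neg]
  simp only [hodd _, ← sub_eq_add_neg, mul_neg]

section InnerProductSpace

variable {E : Type*} [SeminormedAddCommGroup E] [InnerProductSpace ℝ E] [MeasurableSpace E]

lemma even_of_charFun_eq_ofReal {μ : Measure E} {φ : E → ℝ} (hφ : ∀ t, charFun μ t = φ t) :
    φ.Even := fun t => by
  simpa [hφ] using charFun_neg (μ := μ) t

section OpensMeasurableSpace

variable [OpensMeasurableSpace E]

lemma integrable_exp_inner_mul_I (μ : Measure E) [IsFiniteMeasure μ] (t : E) :
    Integrable (fun x : E => Complex.exp (⟪x, t⟫ * Complex.I)) μ :=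
  (BoundedContinuousFunction.innerProbChar t).integrable μ

lemma integral_exp_inner_mul_sin_inner (μ : Measure E) [IsFiniteMeasure μ] (s u : E) :
    ∫ x, Complex.exp (⟪x, s⟫ * Complex.I) * (Real.sin ⟪x, u⟫ : ℂ) ∂μ
      = Complex.I / 2 * (charFun μ (s - u) - charFun μ (s + u)) := by
  have exp_mul_sin (x : E) : Complex.exp (⟪x, s⟫ * Complex.I) * (Real.sin ⟪x, u⟫ : ℂ)
      = Complex.I / 2 * (Complex.exp (⟪x, s - u⟫ * Complex.I)
        - Complex.exp (⟪x, s + u⟫ * Complex.I)) := by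
    rw [inner_sub_right, inner_add_right, Complex.ofReal_sin, Complex.sin]
    push_cast
    rw [sub_eq_add_neg (⟪x, s⟫ : ℂ), add_mul, add_mul, Complex.exp_add, Complex.exp_add]
    ring
  simp_rw [exp_mul_sin]
  rw [integral_const_mul, integral_sub (integrable_exp_inner_mul_I μ _)
    (integrable_exp_inner_mul_I μ _), charFun_apply, charFun_apply]

lemma integrable_charFun_comp_mul [SecondCountableTopology E] {X : Type*} [MeasurableSpace X]
    {μ : Measure E} [SFinite μ] {ν : Measure X} {f : X → E} {g : X → ℂ} (hg : Integrable g ν)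
    (hf : Measurable f) : Integrable (fun u => charFun μ (f u) * g u) ν :=
  hg.bdd_mul (measurable_charFun.comp hf).aestronglyMeasurable
    (ae_of_all _ fun _ => norm_charFun_le _)

lemma integrable_prod_exp_inner_mul_sin_inner_mul [SecondCountableTopology E] {μ ν : Measure E}
    [IsFiniteMeasure μ] [SFinite ν] {g : E → ℂ} (hg : Integrable g ν) (s : E) :
    Integrable (fun p : E × E =>
      Complex.exp (⟪p.1, s⟫ * Complex.I) * (Real.sin ⟪p.1, p.2⟫ : ℂ) * g p.2) (μ.prod ν) := by
  refine (hg.comp_snd μ).bdd_mul (c := 1) (by fun_prop) (ae_of_all _ fun p => ?_)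
  rw [norm_mul, Complex.norm_exp_ofReal_mul_I, one_mul, Complex.norm_real]
  exact Real.abs_sin_le_one _

end OpensMeasurableSpace

theorem integral_exp_inner_mul_integral_sin_inner_mul [BorelSpace E] [SecondCountableTopology E]
    {μ ν : Measure E} [IsFiniteMeasure μ] [SFinite ν] [ν.IsNegInvariant] {g : E → ℂ}
    (hg : Integrable g ν) (hodd : g.Odd) (s : E) :
    ∫ x, Complex.exp (⟪x, s⟫ * Complex.I) * ∫ u, (Real.sin ⟪x, u⟫ : ℂ) * g u ∂ν ∂μ
      = Complex.I * ∫ u, charFun μ (s - u) * g u ∂ν := by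
  have integrable_sub : Integrable (fun u => charFun μ (s - u) * g u) ν :=
    integrable_charFun_comp_mul hg (by fun_prop)
  have integrable_add : Integrable (fun u => charFun μ (s + u) * g u) ν :=
    integrable_charFun_comp_mul hg (by fun_prop)
  calc
    _ = ∫ x, ∫ u, Complex.exp (⟪x, s⟫ * Complex.I) * (Real.sin ⟪x, u⟫ : ℂ) * g u ∂ν ∂μ := by
      simp only [mul_assoc, integral_const_mul]
    _ = ∫ u, ∫ x, Complex.exp (⟪x, s⟫ * Complex.I) * (Real.sin ⟪x, u⟫ : ℂ) * g u ∂μ ∂ν :=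
      integral_integral_swap (integrable_prod_exp_inner_mul_sin_inner_mul hg s)
    _ = Complex.I / 2 * ∫ u, charFun μ (s - u) * g u - charFun μ (s + u) * g u ∂ν := by
      simp only [integral_mul_const, integral_exp_inner_mul_sin_inner, mul_assoc (_ / _),
        integral_const_mul, sub_mul]
    _ = Complex.I * ∫ u, charFun μ (s - u) * g u ∂ν := by
      rw [integral_sub integrable_sub integrable_add, integral_comp_add_mul_of_odd _ hodd]
      ring

end InnerProductSpace

theorem stmt10_general (μ : Measure ℝ) [IsFiniteMeasure μ] (φ : ℝ → ℝ)
    (hφ : ∀ t, charFun μ t = φ t) (w : ℝ → ℝ) (hwe : w.Even)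
    (hwi : Integrable (fun u => u * w u)) (s : ℝ) :
    ∫ x, Complex.exp (Complex.I * s * x)
        * ((∫ u : ℝ, u * Real.sin (u * x) * φ u * w u : ℝ) : ℂ) ∂μ
      = Complex.I * ((∫ u : ℝ, φ (s - u) * φ u * u * w u : ℝ) : ℂ) := by
  let g (u : ℝ) : ℂ := charFun μ u * (u * w u : ℝ)
  have hg : Integrable g := integrable_charFun_comp_mul hwi.ofReal measurable_id
  have hodd : g.Odd := fun u => by simp [g, hφ, even_of_charFun_eq_ofReal hφ u, hwe u]
  calc
    _ = ∫ x, Complex.exp (⟪x, s⟫ * Complex.I) * (∫ u, (Real.sin ⟪x, u⟫ : ℂ) * g u) ∂μ := by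
      simp only [g, hφ, Real.inner_apply, ← integral_complex_ofReal, Complex.ofReal_mul, mul_assoc,
        mul_comm, mul_left_comm]
    _ = Complex.I * ∫ u, charFun μ (s - u) * g u :=
      integral_exp_inner_mul_integral_sin_inner_mul hg hodd s
    _ = _ := by
      simp only [g, hφ, ← integral_complex_ofReal, Complex.ofReal_mul, mul_assoc]

/-- Fourier-kernel transform of the EISE location estimating function:
`∫ e^{isx} h_μ(x) dμ(x) = i ∫ e^{−|s−u|^α − |u|^α} u w(u) du`. -/
theorem stmt10 (μ : Measure ℝ) [IsProbabilityMeasure μ] (α : ℝ) (hα : α ∈ Set.Ioc (0 : ℝ) 2)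
    (hchar : ∀ t : ℝ, ∫ x, Complex.exp (Complex.I * t * x) ∂μ = (Real.exp (-|t| ^ α) : ℂ))
    (w : ℝ → ℝ) (hw0 : ∀ u, 0 ≤ w u) (hwe : ∀ u, w (-u) = w u) (hwm : Measurable w)
    (hwi : Integrable (fun u => |u| * w u)) (s : ℝ) :
    ∫ x, Complex.exp (Complex.I * s * x)
        * ((∫ u : ℝ, u * Real.sin (u * x) * Real.exp (-|u| ^ α) * w u : ℝ) : ℂ) ∂μ
      = Complex.I * ((∫ u : ℝ, Real.exp (-|s - u| ^ α - |u| ^ α) * u * w u : ℝ) : ℂ) := by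
  have hφ (t : ℝ) : charFun μ t = (Real.exp (-|t| ^ α) : ℝ) := by
    simpa only [charFun_apply_real, mul_comm Complex.I, mul_right_comm] using hchar t
  have hwi' : Integrable (fun u => u * w u) :=
    (integrable_norm_iff (by fun_prop)).1 (by simpa [abs_of_nonneg (hw0 _)] using hwi)
  simpa only [← Real.exp_add, ← sub_eq_add_neg] using stmt10_general μ _ hφ w hwe hwi' s
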